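/- If f is pointed and idempotent then f* ≡_W f, and conversely f* ≡_W f implies f is pointed and idempotent. -/

import Mathlib

open scoped Classical

/-! ## Basic notions of Weihrauch complexity -/

/-- The finite prefix of length `m` of a point of Baire space, as a list. -/
def pref (p : ℕ → ℕ) (m : ℕ) : List ℕ := List.ofFn (fun i : Fin m => p i)

/-- Type-2 computability of a partial function on Baire space, defined via monotone
computable word functions producing longer and longer prefixes of the output. -/
def BaireComputable (F : (ℕ → ℕ) →. (ℕ → ℕ)) : Prop :=
  ∃ ψ : List ℕ → List ℕ, Computable ψ ∧
    (∀ u v : List ℕ, u <+: v → ψ u <+: ψ v) ∧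
    ∀ p q, q ∈ F p → ∀ n, ∃ m, (ψ (pref p m))[n]? = some (q n)

/-- The interleaving pairing `⟨p,q⟩` on Baire space. -/
def pairB (p q : ℕ → ℕ) : ℕ → ℕ := fun n => if n % 2 = 0 then p (n / 2) else q (n / 2)

def evenPart (r : ℕ → ℕ) : ℕ → ℕ := fun n => r (2 * n)

def oddPart (r : ℕ → ℕ) : ℕ → ℕ := fun n => r (2 * n + 1)

/-- The `i`-th component of the countable tupling `⟨p₀,p₁,…⟩⟨i,k⟩ = pᵢ(k)`
(using the Cantor pairing). -/
def proj (r : ℕ → ℕ) (i : ℕ) : ℕ → ℕ := fun k => r (Nat.pair i k)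

/-- A represented space: a set `X` together with a surjective partial map
from Baire space onto `X`. -/
structure RepSp (X : Type*) where
  δ : (ℕ → ℕ) →. X
  surj : ∀ x : X, ∃ p, x ∈ δ p

theorem mem_part_mk {α : Type*} {D : Prop} {g : D → α} {a : α} (h : D) (e : g h = a) :
    a ∈ Part.mk D g := Part.mem_mk_iff.mpr ⟨h, e⟩

/-- The identity representation of Baire space. -/
def repBaire : RepSp (ℕ → ℕ) where
  δ := fun p => Part.some p
  surj := fun p => ⟨p, Part.mem_some p⟩

/-- The standard representation of the natural numbers. -/
def repNat : RepSp ℕ where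
  δ := fun p => Part.some (p 0)
  surj := fun n => ⟨fun _ => n, Part.mem_some n⟩

/-- `F` is a realizer of the problem `f :⊆ X ⇉ Y` (a problem is a multi-valued
function `f : X → Set Y`, whose domain is the set of `x` with `f x` nonempty). -/
def Realizes {X Y : Type*} (δX : RepSp X) (δY : RepSp Y)
    (f : X → Set Y) (F : (ℕ → ℕ) →. (ℕ → ℕ)) : Prop :=
  ∀ p x, x ∈ δX.δ p → (f x).Nonempty → ∃ q ∈ F p, ∃ y ∈ δY.δ q, y ∈ f x

/-- Weihrauch reducibility: `f ≤_W g` iff there are computable `H, K` such that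
`p ↦ H⟨p, G(K(p))⟩` realizes `f` whenever `G` realizes `g`. -/
def WRed {X Y Z W : Type*} (δX : RepSp X) (δY : RepSp Y) (δZ : RepSp Z) (δW : RepSp W)
    (f : X → Set Y) (g : Z → Set W) : Prop :=
  ∃ H K : (ℕ → ℕ) →. (ℕ → ℕ), BaireComputable H ∧ BaireComputable K ∧
    ∀ G : (ℕ → ℕ) →. (ℕ → ℕ), Realizes δZ δW g G →
      Realizes δX δY f
        (fun p => (K p).bind fun r => (G r).bind fun q => H (pairB p q))

/-- Strong Weihrauch reducibility: `f ≤_sW g` iff there are computable `H, K`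
such that `H ∘ G ∘ K` realizes `f` whenever `G` realizes `g`. -/
def SWRed {X Y Z W : Type*} (δX : RepSp X) (δY : RepSp Y) (δZ : RepSp Z) (δW : RepSp W)
    (f : X → Set Y) (g : Z → Set W) : Prop :=
  ∃ H K : (ℕ → ℕ) →. (ℕ → ℕ), BaireComputable H ∧ BaireComputable K ∧
    ∀ G : (ℕ → ℕ) →. (ℕ → ℕ), Realizes δZ δW g G →
      Realizes δX δY f (fun p => (K p).bind fun r => (G r).bind fun q => H q)

/-- Weihrauch equivalence. -/
def WEquiv {X Y Z W : Type*} (δX : RepSp X) (δY : RepSp Y) (δZ : RepSp Z) (δW : RepSp W)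
    (f : X → Set Y) (g : Z → Set W) : Prop :=
  WRed δX δY δZ δW f g ∧ WRed δZ δW δX δY g f

/-- Strong Weihrauch equivalence. -/
def SWEquiv {X Y Z W : Type*} (δX : RepSp X) (δY : RepSp Y) (δZ : RepSp Z) (δW : RepSp W)
    (f : X → Set Y) (g : Z → Set W) : Prop :=
  SWRed δX δY δZ δW f g ∧ SWRed δZ δW δX δY g f

/-- The identity problem on Baire space. -/
def idProblem : (ℕ → ℕ) → Set (ℕ → ℕ) := fun p => {p}

/-! ## Constructions on representations and problems -/

/-- Representation of the product of two represented spaces. -/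
def prodRep {X Z : Type*} (δX : RepSp X) (δZ : RepSp Z) : RepSp (X × Z) where
  δ := fun r => (δX.δ (evenPart r)).bind fun x => (δZ.δ (oddPart r)).map fun z => (x, z)
  surj := by
    intro xz
    obtain ⟨p, hp⟩ := δX.surj xz.1
    obtain ⟨q, hq⟩ := δZ.surj xz.2
    have he : evenPart (pairB p q) = p := by
      funext n
      have h1 : (2 * n) % 2 = 0 := by omega
      have h2 : (2 * n) / 2 = n := by omega
      simp [evenPart, pairB, h1, h2]
    have ho : oddPart (pairB p q) = q := by
      funext n
      have h1 : ¬((2 * n + 1) % 2 = 0) := by omega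
      have h2 : (2 * n + 1) / 2 = n := by omega
      simp [oddPart, pairB, h1, h2]
    refine ⟨pairB p q, Part.mem_bind_iff.mpr ⟨xz.1, by rw [he]; exact hp,
      (Part.mem_map_iff _).mpr ⟨xz.2, by rw [ho]; exact hq, rfl⟩⟩⟩

/-- The product `f × g` of two problems. -/
def prodProblem {X Y Z W : Type*} (f : X → Set Y) (g : Z → Set W) :
    X × Z → Set (Y × W) :=
  fun xz => f xz.1 ×ˢ g xz.2

/-- Representation of the disjoint union of two represented spaces. -/
def sumRep {X Z : Type*} (δX : RepSp X) (δZ : RepSp Z) : RepSp (X ⊕ Z) where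
  δ := fun r =>
    if r 0 = 0 then (δX.δ fun n => r (n + 1)).map Sum.inl
    else if r 0 = 1 then (δZ.δ fun n => r (n + 1)).map Sum.inr
    else Part.none
  surj := by
    rintro (x | z)
    · obtain ⟨p, hp⟩ := δX.surj x
      refine ⟨fun n => Nat.casesOn n 0 p, ?_⟩
      show Sum.inl x ∈ (δX.δ p).map Sum.inl
      exact (Part.mem_map_iff _).mpr ⟨x, hp, rfl⟩
    · obtain ⟨p, hp⟩ := δZ.surj z
      refine ⟨fun n => Nat.casesOn n 1 p, ?_⟩
      show Sum.inr z ∈ (δZ.δ p).map Sum.inr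
      exact (Part.mem_map_iff _).mpr ⟨z, hp, rfl⟩

/-- The coproduct `f ⊔ g` of two problems. -/
def coprodProblem {X Y Z W : Type*} (f : X → Set Y) (g : Z → Set W) :
    X ⊕ Z → Set (Y ⊕ W)
  | Sum.inl x => Sum.inl '' f x
  | Sum.inr z => Sum.inr '' g z

/-- The meet `f ⊓ g` of two problems. -/
def meetProblem {X Y Z W : Type*} (f : X → Set Y) (g : Z → Set W) :
    X × Z → Set (Y ⊕ W) :=
  fun xz => Sum.inl '' f xz.1 ∪ Sum.inr '' g xz.2

/-- Representation of the space of sequences `X^ℕ` via the countable tupling. -/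
noncomputable def seqRep {X : Type*} (δX : RepSp X) : RepSp (ℕ → X) where
  δ := fun r => Part.mk (∀ i : ℕ, ∃ x, x ∈ δX.δ (proj r i))
    (fun h i => Classical.choose (h i))
  surj := by
    intro x
    choose p hp using fun i => δX.surj (x i)
    refine ⟨fun m => p (Nat.unpair m).1 (Nat.unpair m).2, ?_⟩
    have hproj : ∀ i, proj (fun m => p (Nat.unpair m).1 (Nat.unpair m).2) i = p i := by
      intro i; funext k; simp [proj]
    have hdom : ∀ i : ℕ, ∃ y, y ∈ δX.δ (proj (fun m => p (Nat.unpair m).1 (Nat.unpair m).2) i) :=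
      fun i => ⟨x i, by rw [hproj i]; exact hp i⟩
    refine mem_part_mk hdom ?_
    funext i
    exact Part.mem_unique (Classical.choose_spec (hdom i)) (by rw [hproj i]; exact hp i)

/-- The parallelization `f̂` of a problem. -/
def parallelProblem {X Y : Type*} (f : X → Set Y) : (ℕ → X) → Set (ℕ → Y) :=
  fun x => {y | ∀ i, y i ∈ f (x i)}

/-- Representation of the finite power `Xⁿ` via the countable tupling. -/
noncomputable def finProdRep (n : ℕ) {X : Type*} (δX : RepSp X) : RepSp (Fin n → X) where
  δ := fun r => Part.mk (∀ i : Fin n, ∃ x, x ∈ δX.δ (proj r i))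
    (fun h i => Classical.choose (h i))
  surj := by
    intro x
    choose p hp using fun i => δX.surj (x i)
    classical
    refine ⟨fun m => if h : (Nat.unpair m).1 < n then p ⟨_, h⟩ (Nat.unpair m).2 else 0, ?_⟩
    have hproj : ∀ i : Fin n,
        proj (fun m => if h : (Nat.unpair m).1 < n then p ⟨_, h⟩ (Nat.unpair m).2 else 0) i
          = p i := by
      intro i; funext k; simp [proj, i.isLt]
    have hdom : ∀ i : Fin n, ∃ y, y ∈ δX.δ
        (proj (fun m => if h : (Nat.unpair m).1 < n then p ⟨_, h⟩ (Nat.unpair m).2 else 0) i) :=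
      fun i => ⟨x i, by rw [hproj i]; exact hp i⟩
    refine mem_part_mk hdom ?_
    funext i
    exact Part.mem_unique (Classical.choose_spec (hdom i)) (by rw [hproj i]; exact hp i)

/-- The `n`-fold product `fⁿ` of a problem with itself. -/
def finProdProblem (n : ℕ) {X Y : Type*} (f : X → Set Y) :
    (Fin n → X) → Set (Fin n → Y) :=
  fun x => {y | ∀ i, y i ∈ f (x i)}

/-- Representation of the space `X*` of words over `X`. -/
noncomputable def starRep {X : Type*} (δX : RepSp X) : RepSp (Σ n : ℕ, Fin n → X) where
  δ := fun r => Part.mk (∀ i : Fin (r 0), ∃ x, x ∈ δX.δ (proj (fun m => r (m + 1)) i))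
    (fun h => ⟨r 0, fun i => Classical.choose (h i)⟩)
  surj := by
    rintro ⟨n, x⟩
    choose p hp using fun i => δX.surj (x i)
    classical
    have hproj : ∀ i : Fin n,
        proj (fun m' => if h : (Nat.unpair m').1 < n then p ⟨_, h⟩ (Nat.unpair m').2 else 0) i
          = p i := by
      intro i; funext k; simp [proj, i.isLt]
    have hdom : ∀ i : Fin n, ∃ y, y ∈ δX.δ
        (proj (fun m' => if h : (Nat.unpair m').1 < n then p ⟨_, h⟩ (Nat.unpair m').2 else 0) i) :=
      fun i => ⟨x i, by rw [hproj i]; exact hp i⟩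
    refine ⟨fun m => Nat.casesOn m n
      (fun m' => if h : (Nat.unpair m').1 < n then p ⟨_, h⟩ (Nat.unpair m').2 else 0),
      Part.mem_mk_iff.mpr ⟨hdom, ?_⟩⟩
    have hx : (fun i : Fin n => Classical.choose (hdom i)) = x := funext fun i =>
      Part.mem_unique (Classical.choose_spec (hdom i)) (by rw [hproj i]; exact hp i)
    exact congrArg (Sigma.mk n) hx

/-- The finite parallelization `f*` of a problem. -/
def starProblem {X Y : Type*} (f : X → Set Y) :
    (Σ n : ℕ, Fin n → X) → Set (Σ n : ℕ, Fin n → Y) :=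
  fun x => {y | ∃ e : x.1 = y.1, ∀ i : Fin x.1, y.2 (Fin.cast e i) ∈ f (x.2 i)}

/-- Representation of a countable disjoint union of represented spaces. -/
def csumRep {Z : ℕ → Type*} (δZ : ∀ i, RepSp (Z i)) : RepSp (Σ i, Z i) where
  δ := fun r => ((δZ (r 0)).δ (fun n => r (n + 1))).map fun z => ⟨r 0, z⟩
  surj := by
    rintro ⟨i, z⟩
    obtain ⟨p, hp⟩ := (δZ i).surj z
    exact ⟨fun n => Nat.casesOn n i p, (Part.mem_map_iff _).mpr ⟨z, hp, rfl⟩⟩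

/-- The countable coproduct `⊔ᵢ gᵢ` of a sequence of problems. -/
def csumProblem {Z W : ℕ → Type*} (g : ∀ i, Z i → Set (W i)) :
    (Σ i, Z i) → Set (Σ i, W i) :=
  fun x => Sigma.mk x.1 '' g x.1 x.2

/-! ## Limits and jumps -/

/-- The limit map on Baire space, as a (single-valued) problem:
`lim⟨p₀,p₁,…⟩` is the pointwise limit of the sequence `(pₙ)ₙ`. -/
def limProblem : (ℕ → ℕ) → Set (ℕ → ℕ) :=
  fun r => {q | ∀ n, ∃ N, ∀ m, N ≤ m → proj r m n = q n}

/-- The limit map on Baire space as a partial (single-valued) function. -/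
noncomputable def limP : (ℕ → ℕ) →. (ℕ → ℕ) :=
  fun r => Part.mk (∀ n, ∃ N, ∀ m, N ≤ m → proj r m n = proj r N n)
    (fun h n => proj r (Classical.choose (h n)) n)

/-- The jump `(X′, δ′)` of a represented space: `δ′ := δ ∘ lim`. -/
noncomputable def jumpRep {X : Type*} (δ : RepSp X) : RepSp X where
  δ := fun p => (limP p).bind δ.δ
  surj := by
    intro x
    obtain ⟨p, hp⟩ := δ.surj x
    refine ⟨fun m => p (Nat.unpair m).2, Part.mem_bind_iff.mpr ⟨p, ?_, hp⟩⟩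
    have hproj : ∀ m, proj (fun m => p (Nat.unpair m).2) m = p := by
      intro m; funext k; simp [proj]
    have hdom : ∀ n, ∃ N, ∀ m, N ≤ m →
        proj (fun m => p (Nat.unpair m).2) m n = proj (fun m => p (Nat.unpair m).2) N n :=
      fun n => ⟨0, fun m _ => by rw [hproj m, hproj 0]⟩
    refine mem_part_mk hdom ?_
    funext n
    rw [hproj]

/-! ## Choice problems -/

/-- The representation of subsets of `ℕ` by enumerations of their complements:
`p` is a name of `A` iff `p` enumerates (via `p m = n + 1`) exactly the `n ∉ A`. -/
def enumNegRep : RepSp (Set ℕ) where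
  δ := fun p => Part.some {n | ∀ m, p m ≠ n + 1}
  surj := by
    intro S
    by_cases h : Sᶜ.Nonempty
    · obtain ⟨f, hf⟩ := (Set.to_countable Sᶜ).exists_eq_range h
      refine ⟨fun m => f m + 1, Part.mem_some_iff.mpr ?_⟩
      ext n
      simp only [Set.mem_setOf_eq]
      constructor
      · intro hn m hm
        have hfm : f m ∈ Sᶜ := by rw [hf]; exact ⟨m, rfl⟩
        have hfmn : f m = n := by omega
        rw [hfmn] at hfm
        exact hfm hn
      · intro hn
        by_contra hS
        have hmem : n ∈ Sᶜ := hS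
        rw [hf] at hmem
        obtain ⟨m, hm⟩ := hmem
        exact hn m (by omega)
    · refine ⟨fun _ => 0, Part.mem_some_iff.mpr ?_⟩
      have hS : S = Set.univ := by
        rw [← compl_compl S, Set.not_nonempty_iff_eq_empty.mp h, Set.compl_empty]
      rw [hS]
      ext n
      simp

/-- Choice on the natural numbers: given (a name of) a nonempty set `A ⊆ ℕ`,
find an element of `A`. -/
def CNat : Set ℕ → Set ℕ := fun A => A

/-- Choice on the finite set `{0, …, k-1}`. -/
def CFin (k : ℕ) : Set ℕ → Set ℕ := fun A => {n | n ∈ A ∧ A ⊆ Set.Iio k}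

/-- The limited principle of omniscience as a problem. -/
noncomputable def LPOProblem : (ℕ → ℕ) → Set ℕ :=
  fun p => {if ∃ k, p k = 0 then 1 else 0}


/-- Restriction of a problem on Baire space to a set `A`. -/
def restrictProblem (F : (ℕ → ℕ) → Set (ℕ → ℕ)) (A : Set (ℕ → ℕ)) :
    (ℕ → ℕ) → Set (ℕ → ℕ) :=
  fun p => {q | q ∈ F p ∧ p ∈ A}

/-- A problem is a fractal if it has a representative on Baire space all of whose
restrictions to clopen sets meeting its domain are Weihrauch equivalent to it. -/
def Fractal {X Y : Type*} (δX : RepSp X) (δY : RepSp Y) (f : X → Set Y) : Prop :=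
  ∃ F : (ℕ → ℕ) → Set (ℕ → ℕ),
    WEquiv repBaire repBaire δX δY F f ∧
    ∀ A : Set (ℕ → ℕ), IsClopen A → (A ∩ {p | (F p).Nonempty}).Nonempty →
      WEquiv repBaire repBaire repBaire repBaire (restrictProblem F A) F

/-- A problem `f` is densely realized if for every name `p` of an admissible instance
the set of names of solutions is dense in the domain of the output representation. -/
def DenselyRealized {X Y : Type*} (δX : RepSp X) (δY : RepSp Y) (f : X → Set Y) : Prop :=
  ∀ p, ∀ x ∈ δX.δ p, (f x).Nonempty →
    {q : ℕ → ℕ | (δY.δ q).Dom} ⊆ closure {q : ℕ → ℕ | ∃ y ∈ δY.δ q, y ∈ f x}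

/-- Turing reducibility on Baire space: `a` is computable from `b`. -/
def TRed (a b : ℕ → ℕ) : Prop := ∃ F, BaireComputable F ∧ a ∈ F b

/-- The two-point space `{p, q}` represented by the identity. -/
def pqRep (p q : ℕ → ℕ) : RepSp {r : ℕ → ℕ // r = p ∨ r = q} where
  δ := fun r => Part.mk (r = p ∨ r = q) (fun h => ⟨r, h⟩)
  surj := fun x => ⟨x.1, Part.mem_mk_iff.mpr ⟨x.2, rfl⟩⟩

/-- The problem `m_A` associated with a set `A ⊆ ℕ`. -/
noncomputable def mProblem (p q : ℕ → ℕ) (A : Set ℕ) :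
    ℕ → Set {r : ℕ → ℕ // r = p ∨ r = q} :=
  fun n => {y | y.1 = if n ∈ A then p else q}

/-- The join `A ⊕ B` of two sets of natural numbers. -/
def mJoin (A B : Set ℕ) : Set ℕ :=
  {k | (k % 2 = 0 ∧ k / 2 ∈ A) ∨ (k % 2 = 1 ∧ k / 2 ∈ B)}

/-- The cardinality `#f` of a problem: the supremum of the cardinalities of sets
`M ⊆ dom f` whose images under `f` are pairwise disjoint. -/
noncomputable def problemCard {X Y : Type} (f : X → Set Y) : Cardinal :=
  sSup {c | ∃ M : Set X, (∀ x ∈ M, (f x).Nonempty) ∧ M.PairwiseDisjoint f ∧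
    c = Cardinal.mk M}

/-- Computability of a problem: it has a computable realizer. -/
def ComputableProblem {X Y : Type*} (δX : RepSp X) (δY : RepSp Y) (f : X → Set Y) : Prop :=
  ∃ F, BaireComputable F ∧ Realizes δX δY f F

/-- The minimum function on Baire space. -/
def minProblem : (ℕ → ℕ) → Set ℕ :=
  fun p => {n | n ∈ Set.range p ∧ ∀ m, n ≤ p m}

/-- The complementary minimum function `minᶜ`. -/
def mincProblem : (ℕ → ℕ) → Set ℕ :=
  fun p => {n | (∀ m, p m ≠ n) ∧ ∀ j, j < n → ∃ m, p m = j}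

/-- The maximum function on Baire space (defined on bounded sequences). -/
def maxProblem : (ℕ → ℕ) → Set ℕ :=
  fun p => {n | n ∈ Set.range p ∧ ∀ m, p m ≤ n}

/-!
Pass from problems to the relation on Baire space that `q` names a solution of the instance named by
`p`. The identity, `f` and `f × f` all reduce to `f*`, using words of length `0`, `1` and `2`.

For `f* ≤ f`, pointedness provides an additional instance of `f`, so `f*` reduces to the coproduct
of the problems `fⁿ × f`. Idempotency reduces `fⁿ⁺¹ × f` to `fⁿ × f`, by merging one component of
the word into the last factor, with the same forward and backward maps for all `n`; and any such
uniform chain of reductions `gₙ₊₁ ≤ gₙ` gives `⨆ₙ gₙ ≤ g₀`. For the latter, iterate the forward map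
`n` times starting from an instance of `gₙ`, stacking up all intermediate instances, then pop them
one after the other while iterating the backward map.
-/

/-- Baire space. -/
abbrev Baire : Type := ℕ → ℕ

section Sequences

/-- The sequence with first entry `k` followed by the entries of `p`. -/
def consB (k : ℕ) (p : Baire) : Baire
  | 0 => k
  | n + 1 => p n

/-- The sequence `p` without its first entry. -/
def tailB (p : Baire) : Baire := fun n => p (n + 1)

/-- The countable tuple `⟨p, q₀, q₁, …⟩`, where `q = ⟨q₀, q₁, …⟩`. -/
def consCol (p q : Baire) : Baire := fun n =>
  if n.unpair.1 = 0 then p n.unpair.2 else q (Nat.pair (n.unpair.1 - 1) n.unpair.2)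

/-- The countable tuple `⟨q₁, q₂, …⟩`, where `q = ⟨q₀, q₁, …⟩`. -/
def tailCol (q : Baire) : Baire := fun n => q (Nat.pair (n.unpair.1 + 1) n.unpair.2)

@[simp] theorem consB_zero (k : ℕ) (p : Baire) : consB k p 0 = k := rfl

@[simp] theorem tailB_consB (k : ℕ) (p : Baire) : tailB (consB k p) = p := rfl

@[simp] theorem evenPart_pairB (p q : Baire) : evenPart (pairB p q) = p := by
  funext n
  simp [evenPart, pairB]

@[simp] theorem oddPart_pairB (p q : Baire) : oddPart (pairB p q) = q := by
  funext n
  simp [oddPart, pairB, Nat.add_mod, Nat.mul_add_div]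

@[simp] theorem proj_zero_consCol (p q : Baire) : proj (consCol p q) 0 = p := by
  funext n
  simp [proj, consCol]

@[simp] theorem tailCol_consCol (p q : Baire) : tailCol (consCol p q) = q := by
  funext n
  simp [tailCol, consCol]

theorem proj_tailCol (q : Baire) (i : ℕ) : proj (tailCol q) i = proj q (i + 1) := by
  funext n
  simp [proj, tailCol]

end Sequences

section Prefixes

theorem getElem?_of_isPrefix {α : Type*} {u v : List α} (h : u <+: v) {n : ℕ} {a : α}
    (ha : u[n]? = some a) : v[n]? = some a := by
  obtain ⟨hn, rfl⟩ := List.getElem?_eq_some_iff.1 ha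
  exact List.prefix_iff_getElem?.1 h n hn

@[simp] theorem length_pref (p : Baire) (m : ℕ) : (pref p m).length = m := List.length_ofFn

theorem getElem?_pref (p : Baire) {m i : ℕ} (h : i < m) : (pref p m)[i]? = some (p i) := by
  simp [pref, h]

theorem pref_isPrefix_iff {p : Baire} {m : ℕ} {u : List ℕ} :
    pref p m <+: u ↔ ∀ i < m, u[i]? = some (p i) := by
  simp [List.prefix_iff_getElem?, pref]

theorem pref_isPrefix_pref (p : Baire) {m k : ℕ} (h : m ≤ k) : pref p m <+: pref p k :=
  pref_isPrefix_iff.2 fun _ hi => getElem?_pref p (hi.trans_le h)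

theorem pref_succ (p : Baire) (m : ℕ) : pref p (m + 1) = pref p m ++ [p m] :=
  List.ofFn_succ_last

theorem pref_succ_eq_cons (p : Baire) (m : ℕ) :
    pref p (m + 1) = p 0 :: pref (tailB p) m := List.ofFn_succ

theorem eventually_pref {P : List ℕ → Prop} (hP : ∀ u v, u <+: v → P u → P v) {p : Baire}
    (h : ∃ m, P (pref p m)) : ∀ᶠ m in Filter.atTop, P (pref p m) := by
  obtain ⟨m, hm⟩ := h
  filter_upwards [Filter.eventually_ge_atTop m] with k hk
  exact hP _ _ (pref_isPrefix_pref p hk) hm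

end Prefixes

section WordFunctions

/-- The monotonicity required of the word functions in `BaireComputable`. -/
def PrefixMonotone (ψ : List ℕ → List ℕ) : Prop := ∀ u v, u <+: v → ψ u <+: ψ v

/-- The word function `ψ` maps the prefixes of `p` to words exhausting `q`, as required in
`BaireComputable`. -/
def Tracks (ψ : List ℕ → List ℕ) (p q : Baire) : Prop :=
  ∀ n, ∃ m, (ψ (pref p m))[n]? = some (q n)

variable {ψ χ : List ℕ → List ℕ} {p q r : Baire}

theorem Tracks.exists_pref_isPrefix (hψ : PrefixMonotone ψ) (h : Tracks ψ p q) (k : ℕ) :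
    ∃ m, pref q k <+: ψ (pref p m) := by
  have hev : ∀ i < k, ∀ᶠ m in Filter.atTop, (ψ (pref p m))[i]? = some (q i) := fun i _ =>
    eventually_pref (P := fun u => (ψ u)[i]? = some (q i))
      (fun u v huv => getElem?_of_isPrefix (hψ u v huv)) (h i)
  obtain ⟨m, hm⟩ := ((Set.finite_lt_nat k).eventually_all.2 hev).exists
  exact ⟨m, pref_isPrefix_iff.2 hm⟩

theorem tracks_id (p : Baire) : Tracks id p p := fun n =>
  ⟨n + 1, getElem?_pref p n.lt_succ_self⟩

theorem Tracks.comp (hχ : PrefixMonotone χ) (hψ : PrefixMonotone ψ) (hqr : Tracks χ q r)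
    (hpq : Tracks ψ p q) : Tracks (χ ∘ ψ) p r := by
  intro n
  obtain ⟨k, hk⟩ := hqr n
  obtain ⟨m, hm⟩ := hpq.exists_pref_isPrefix hψ k
  exact ⟨m, getElem?_of_isPrefix (hχ _ _ hm) hk⟩

theorem PrefixMonotone.iterate (hψ : PrefixMonotone ψ) (n : ℕ) : PrefixMonotone ψ^[n] := by
  induction n with
  | zero => exact fun _ _ huv => huv
  | succ _ ih => exact fun u v huv => ih _ _ (hψ u v huv)

theorem computable_nat_iterate {α β : Type*} [Primcodable α] [Primcodable β] {f : α → ℕ}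
    {g : α → β} {h : α → β → β} (hf : Computable f) (hg : Computable g) (hh : Computable₂ h) :
    Computable fun a => (h a)^[f a] (g a) := by
  have hstep : Computable₂ fun (a : α) (x : ℕ × β) => h a x.2 :=
    hh.comp Computable.fst (Computable.snd.comp Computable.snd)
  refine (Computable.nat_rec hf hg hstep).of_eq fun a => ?_
  induction f a with
  | zero => rfl
  | succ n ih => rw [Function.iterate_succ_apply', ← ih]

end WordFunctions

section DigitFunctions

/-- Append to `w` its next digit, as given by the digit function `φ`, if that is defined. -/
def appendDigit (φ : ℕ → Option ℕ) (w : List ℕ) : List ℕ := w ++ (φ w.length).toList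

/-- The word of the first `k` digits given by the digit function `φ`, cut off before the first
undefined digit. -/
def digitWord (φ : ℕ → Option ℕ) (k : ℕ) : List ℕ := (appendDigit φ)^[k] []

variable {φ φ' : ℕ → Option ℕ}

theorem digitWord_succ (φ : ℕ → Option ℕ) (k : ℕ) :
    digitWord φ (k + 1) = appendDigit φ (digitWord φ k) := Function.iterate_succ_apply' ..

theorem eq_some_of_getElem?_digitWord {k n a : ℕ} (h : (digitWord φ k)[n]? = some a) :
    φ n = some a := by
  induction k with
  | zero => simp [digitWord] at h
  | succ k ih =>
    rw [digitWord_succ, appendDigit, List.getElem?_append] at h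
    split_ifs at h with hn
    · exact ih h
    · cases hφ : φ (digitWord φ k).length with
      | none => simp [hφ] at h
      | some b =>
        simp only [hφ, Option.toList_some, List.getElem?_singleton, Option.ite_none_right_eq_some,
          Option.some.injEq] at h
        rw [← h.2, ← hφ]
        congr 1
        omega

theorem digitWord_isPrefix_of_le (φ : ℕ → Option ℕ) {k l : ℕ} (h : k ≤ l) :
    digitWord φ k <+: digitWord φ l := by
  induction l, h using Nat.le_induction with
  | base => exact List.prefix_rfl
  | succ l _ ih =>
    rw [digitWord_succ]
    exact ih.trans (List.prefix_append _ _)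

theorem digitWord_eq_pref {p : Baire} {k : ℕ} (h : ∀ i < k, φ i = some (p i)) :
    digitWord φ k = pref p k := by
  induction k with
  | zero => rfl
  | succ k ih =>
    rw [digitWord_succ, ih fun i hi => h i (hi.trans k.lt_succ_self), appendDigit, length_pref,
      h k k.lt_succ_self, Option.toList_some, pref_succ]

theorem digitWord_isPrefix_digitWord (h : ∀ n a, φ n = some a → φ' n = some a) (k : ℕ) :
    digitWord φ k <+: digitWord φ' k := by
  induction k with
  | zero => exact List.prefix_rfl
  | succ k ih =>
    simp only [digitWord_succ, appendDigit]
    cases ha : φ (digitWord φ k).length with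
    | none => simpa using ih.trans (List.prefix_append _ _)
    | some a =>
      obtain ⟨_ | ⟨b, t⟩, ht⟩ := ih
      · rw [List.append_nil] at ht
        simp [← ht, h _ a ha]
      · have hb : (digitWord φ' k)[(digitWord φ k).length]? = some b := by simp [← ht]
        obtain rfl : a = b :=
          Option.some.inj ((h _ a ha).symm.trans (eq_some_of_getElem?_digitWord hb))
        simp [← ht]

theorem computable_digitWord {φ : List ℕ → ℕ → Option ℕ} (hφ : Computable₂ φ) :
    Computable fun u => digitWord (φ u) u.length := by
  have happend : Computable₂ fun u w => appendDigit (φ u) w := by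
    have hdigit : Computable fun x : List ℕ × List ℕ => φ x.1 x.2.length :=
      hφ.comp Computable.fst (Computable.list_length.comp Computable.snd)
    have hconcat : Computable₂ fun (x : List ℕ × List ℕ) (a : ℕ) => x.2 ++ [a] :=
      Computable.list_concat.comp (Computable.snd.comp Computable.fst) Computable.snd
    refine (Computable.option_casesOn hdigit Computable.snd hconcat).of_eq fun x => ?_
    simp only [appendDigit]
    cases φ x.1 x.2.length with
    | none => exact (List.append_nil _).symm
    | some a => rfl
  exact computable_nat_iterate Computable.list_length (Computable.const []) happend

end DigitFunctions

namespace BaireComputable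

variable {F G : Baire →. Baire}

theorem of_digits {φ : List ℕ → ℕ → Option ℕ} (hφ : Computable₂ φ)
    (hmono : ∀ u v n a, u <+: v → φ u n = some a → φ v n = some a)
    (hF : ∀ p, ∀ q ∈ F p, ∀ n, ∃ m, φ (pref p m) n = some (q n)) : BaireComputable F := by
  refine ⟨fun u => digitWord (φ u) u.length, computable_digitWord hφ, fun u v huv => ?_,
    fun p q hq n => ?_⟩
  · exact (digitWord_isPrefix_digitWord (fun n a => hmono u v n a huv) _).trans
      (digitWord_isPrefix_of_le _ huv.length_le)
  · have hev : ∀ i < n + 1, ∀ᶠ m in Filter.atTop, φ (pref p m) i = some (q i) := fun i _ =>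
      eventually_pref (P := fun u => φ u i = some (q i)) (fun u v => hmono u v i _) (hF p q hq i)
    obtain ⟨m, hm, hnm⟩ := (((Set.finite_lt_nat (n + 1)).eventually_all.2 hev).and
      (Filter.eventually_ge_atTop (n + 1))).exists
    refine ⟨m, ?_⟩
    simp only [length_pref]
    refine getElem?_of_isPrefix (digitWord_isPrefix_of_le _ hnm) ?_
    rw [digitWord_eq_pref hm, getElem?_pref q n.lt_succ_self]

theorem comp (hG : BaireComputable G) (hF : BaireComputable F) :
    BaireComputable fun p => (F p).bind G := by
  obtain ⟨χ, hχ, hχm, hχG⟩ := hG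
  obtain ⟨ψ, hψ, hψm, hψF⟩ := hF
  refine ⟨χ ∘ ψ, hχ.comp hψ, fun u v huv => hχm _ _ (hψm u v huv), fun p r hr => ?_⟩
  obtain ⟨q, hq, hr⟩ := Part.mem_bind_iff.1 hr
  exact Tracks.comp hχm hψm (hχG q r hr) (hψF p q hq)

theorem pair (hF : BaireComputable F) (hG : BaireComputable G) :
    BaireComputable fun p => (F p).bind fun q => (G p).map (pairB q) := by
  obtain ⟨ψ, hψ, hψm, hψF⟩ := hF
  obtain ⟨χ, hχ, hχm, hχG⟩ := hG
  have hhalf : Computable fun a : List ℕ × ℕ => a.2 / 2 :=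
    (Primrec.nat_div.comp Primrec.snd (Primrec.const 2)).to_comp
  have heven : Computable fun a : List ℕ × ℕ => decide (a.2 % 2 = 0) :=
    (Primrec.eq.comp (Primrec.nat_mod.comp Primrec.snd (Primrec.const 2))
      (Primrec.const 0)).decide.to_comp
  refine of_digits (φ := fun u n => bif decide (n % 2 = 0) then (ψ u)[n / 2]? else (χ u)[n / 2]?)
    (heven.cond (Computable.list_getElem?.comp (hψ.comp Computable.fst) hhalf)
      (Computable.list_getElem?.comp (hχ.comp Computable.fst) hhalf)) ?_ ?_
  · intro u v n a huv
    by_cases hn : n % 2 = 0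
    · simpa [hn] using getElem?_of_isPrefix (hψm u v huv)
    · simpa [hn] using getElem?_of_isPrefix (hχm u v huv)
  · intro p t ht n
    obtain ⟨q, hq, r, hr, rfl⟩ : ∃ q ∈ F p, ∃ r ∈ G p, pairB q r = t := by simpa using ht
    by_cases hn : n % 2 = 0
    · simpa [hn, pairB] using hψF p q hq (n / 2)
    · simpa [hn, pairB] using hχG p r hr (n / 2)

end BaireComputable

/-- Computability of a total map on Baire space. -/
def ComputableMap (k : Baire → Baire) : Prop := BaireComputable fun p => Part.some (k p)

namespace ComputableMap

variable {k l : Baire → Baire}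

theorem reindex {e : ℕ → ℕ} (he : Computable e) : ComputableMap fun p n => p (e n) := by
  refine BaireComputable.of_digits (φ := fun u n => u[e n]?)
    (Computable.list_getElem?.comp Computable.fst (he.comp Computable.snd))
    (fun _ _ _ _ huv => getElem?_of_isPrefix huv) fun p q hq n => ?_
  rw [Part.mem_some_iff.1 hq]
  exact tracks_id p (e n)

protected theorem const {c : Baire} (hc : Computable c) : ComputableMap fun _ => c := by
  refine BaireComputable.of_digits (φ := fun _ n => some (c n))
    (Computable.option_some.comp (hc.comp Computable.snd)) (fun _ _ _ _ _ h => h)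
    fun p q hq n => ?_
  simp [Part.mem_some_iff.1 hq]

protected theorem comp (hk : ComputableMap k) (hl : ComputableMap l) :
    ComputableMap fun p => k (l p) := by
  simpa [ComputableMap] using BaireComputable.comp hk hl

protected theorem id : ComputableMap fun p => p := reindex Computable.id

protected theorem evenPart (hk : ComputableMap k) : ComputableMap fun p => evenPart (k p) :=
  (reindex (Primrec.nat_mul.comp (Primrec.const 2) Primrec.id).to_comp).comp hk

protected theorem oddPart (hk : ComputableMap k) : ComputableMap fun p => oddPart (k p) :=
  (reindex
    (Primrec.succ.comp (Primrec.nat_mul.comp (Primrec.const 2) Primrec.id)).to_comp).comp hk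

protected theorem proj (hk : ComputableMap k) (i : ℕ) : ComputableMap fun p => proj (k p) i :=
  (reindex (Primrec₂.natPair.comp (Primrec.const i) Primrec.id).to_comp).comp hk

protected theorem tailB (hk : ComputableMap k) : ComputableMap fun p => tailB (k p) :=
  (reindex Primrec.succ.to_comp).comp hk

protected theorem tailCol (hk : ComputableMap k) : ComputableMap fun p => tailCol (k p) :=
  (reindex (Primrec₂.natPair.comp (Primrec.succ.comp (Primrec.fst.comp Primrec.unpair))
    (Primrec.snd.comp Primrec.unpair)).to_comp).comp hk

protected theorem pairB (hk : ComputableMap k) (hl : ComputableMap l) :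
    ComputableMap fun p => pairB (k p) (l p) := by
  simpa [ComputableMap] using BaireComputable.pair hk hl

protected theorem consB (hk : ComputableMap k) (hl : ComputableMap l) :
    ComputableMap fun p => consB (k p 0) (l p) := by
  have he : Computable fun n => 2 * n - 1 :=
    (Primrec.nat_sub.comp (Primrec.nat_mul.comp (Primrec.const 2) Primrec.id)
      (Primrec.const 1)).to_comp
  convert (reindex he).comp (hk.pairB hl) using 3 with p n
  cases n with
  | zero => rfl
  | succ n => simp [consB, pairB, Nat.mul_add, Nat.add_mod, Nat.mul_add_div]

protected theorem consCol (hk : ComputableMap k) (hl : ComputableMap l) :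
    ComputableMap fun p => consCol (k p) (l p) := by
  have hfst : Primrec fun n : ℕ => n.unpair.1 := Primrec.fst.comp Primrec.unpair
  have hsnd : Primrec fun n : ℕ => n.unpair.2 := Primrec.snd.comp Primrec.unpair
  have hdouble : Primrec fun n : ℕ => 2 * n := Primrec.nat_mul.comp (Primrec.const 2) Primrec.id
  have he : Computable fun n : ℕ => if n.unpair.1 = 0 then 2 * n.unpair.2
      else 2 * Nat.pair (n.unpair.1 - 1) n.unpair.2 + 1 :=
    (Primrec.ite (Primrec.eq.comp hfst (Primrec.const 0)) (hdouble.comp hsnd)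
      (Primrec.succ.comp (hdouble.comp
        (Primrec₂.natPair.comp (Primrec.pred.comp hfst) hsnd)))).to_comp
  convert (reindex he).comp (hk.pairB hl) using 3 with p n
  by_cases hn : n.unpair.1 = 0
  · simp [consCol, pairB, hn]
  · simp [consCol, pairB, hn, Nat.add_mod, Nat.mul_add_div]

end ComputableMap

/-- The `n`-fold iterate of a partial map. -/
def iterateB (F : Baire →. Baire) : ℕ → Baire →. Baire
  | 0 => Part.some
  | n + 1 => fun p => (F p).bind (iterateB F n)

theorem mem_iterateB_succ {F : Baire →. Baire} {n : ℕ} {p q : Baire} :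
    q ∈ iterateB F (n + 1) p ↔ ∃ r ∈ F p, q ∈ iterateB F n r := Part.mem_bind_iff

theorem mem_iterateB_succ' {F : Baire →. Baire} {n : ℕ} {p q : Baire} :
    q ∈ iterateB F (n + 1) p ↔ ∃ r ∈ iterateB F n p, q ∈ F r := by
  induction n generalizing p with
  | zero => simp [iterateB]
  | succ n ih =>
    rw [mem_iterateB_succ]
    simp only [ih, mem_iterateB_succ (n := n)]
    tauto

namespace BaireComputable

variable {F : Baire →. Baire}

theorem comp_map (hF : BaireComputable F) {k : Baire → Baire} (hk : ComputableMap k) :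
    BaireComputable fun p => F (k p) := by
  have h : (fun p => F (k p)) = fun p => (Part.some (k p)).bind F :=
    funext fun p => (Part.bind_some (k p) F).symm
  exact h ▸ hF.comp hk

theorem bind (hF : BaireComputable F) {G : Baire → Baire →. Baire}
    (hG : BaireComputable fun r => G (evenPart r) (oddPart r)) :
    BaireComputable fun p => (F p).bind (G p) := by
  simpa [Part.bind_map] using hG.comp (pair ComputableMap.id hF)

theorem map (hF : BaireComputable F) {k : Baire → Baire → Baire}
    (hk : ComputableMap fun r => k (evenPart r) (oddPart r)) :
    BaireComputable fun p => (F p).map (k p) := by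
  simpa [Part.bind_some_eq_map] using hF.bind (G := fun p q => Part.some (k p q)) hk

theorem iterate (hF : BaireComputable F) :
    BaireComputable fun p => iterateB F (p 0) (tailB p) := by
  obtain ⟨ψ, hψ, hψm, hψF⟩ := hF
  have hmono : ∀ n, PrefixMonotone ψ^[n] := PrefixMonotone.iterate hψm
  have htracks : ∀ n p q, q ∈ iterateB F n p → Tracks ψ^[n] p q := by
    intro n
    induction n with
    | zero =>
      intro p q hq
      rw [Part.mem_some_iff.1 hq]
      exact tracks_id p
    | succ n ih =>
      intro p q hq
      obtain ⟨r, hr, hq⟩ := mem_iterateB_succ.1 hq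
      exact (ih r q hq).comp (hmono n) hψm (hψF p r hr)
  refine ⟨fun u => ψ^[u.headI] u.tail, computable_nat_iterate Primrec.list_headI.to_comp
    Primrec.list_tail.to_comp (hψ.comp Computable.snd), ?_, fun p q hq n => ?_⟩
  · rintro (_ | ⟨a, u⟩) v huv
    · exact List.nil_prefix
    · obtain ⟨v, rfl, h⟩ := List.cons_prefix_iff.1 huv
      exact hmono a u v h
  · obtain ⟨m, hm⟩ := htracks _ _ _ hq n
    exact ⟨m + 1, by simpa [pref_succ_eq_cons] using hm⟩

end BaireComputable

/-- A problem on Baire space: to each instance the set of its solutions. -/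
abbrev NameProblem : Type := Baire → Set Baire

namespace NameProblem

/-- The problem of finding a name of a solution of `f` from a name of an instance of `f`. -/
def ofProblem {X Y : Type*} (δX : RepSp X) (δY : RepSp Y) (f : X → Set Y) : NameProblem :=
  fun p => {q | ∃ x ∈ δX.δ p, ∃ y ∈ δY.δ q, y ∈ f x}

/-- The product of two problems. -/
def prod (F G : NameProblem) : NameProblem :=
  fun p => {q | evenPart q ∈ F (evenPart p) ∧ oddPart q ∈ G (oddPart p)}

/-- The `n`-fold product of `F` with itself. Only the first `n` components of an instance or a
solution are relevant. -/
def pow (n : ℕ) (F : NameProblem) : NameProblem :=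
  fun p => {q | ∀ i < n, proj q i ∈ F (proj p i)}

/-- The finite parallelization of `F`; the first entry of a name is the length of the word. -/
def star (F : NameProblem) : NameProblem :=
  fun p => {q | q 0 = p 0 ∧ tailB q ∈ pow (p 0) F (tailB p)}

/-- The countable coproduct of the problems `G n`. The first entry of an instance selects the
problem, which solutions do not have to repeat. -/
def coprod (G : ℕ → NameProblem) : NameProblem := fun p => G (p 0) (tailB p)

/-- `K` and `H` witness that `F` reduces to `G`: the forward map `K` turns instances of `F` into
instances of `G`, and the backward map `H` turns solutions of the latter into solutions of the
former. -/
def ReducesVia (F G : NameProblem) (K H : Baire →. Baire) : Prop :=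
  ∀ p, (F p).Nonempty → ∃ r ∈ K p, (G r).Nonempty ∧ ∀ q ∈ G r, ∃ t ∈ H (pairB p q), t ∈ F p

/-- Weihrauch reducibility for problems on Baire space. -/
def ReducesTo (F G : NameProblem) : Prop :=
  ∃ K H, BaireComputable K ∧ BaireComputable H ∧ F.ReducesVia G K H

section Names

variable {X Y Z W : Type*} {δX : RepSp X} {δY : RepSp Y} {δZ : RepSp Z} {δW : RepSp W}
  {f : X → Set Y} {g : Z → Set W}

theorem realizes_iff {R : Baire →. Baire} :
    Realizes δX δY f R ↔ ∀ p, (ofProblem δX δY f p).Nonempty →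
      ∃ q ∈ R p, q ∈ ofProblem δX δY f p := by
  constructor
  · rintro h p ⟨_, x, hx, y, _, hyx⟩
    obtain ⟨q, hq, y', hy', hyx'⟩ := h p x hx ⟨y, hyx⟩
    exact ⟨q, hq, x, hx, y', hy', hyx'⟩
  · rintro h p x hx ⟨y, hyx⟩
    obtain ⟨r, hr⟩ := δY.surj y
    obtain ⟨q, hq, x', hx', y', hy', hyx'⟩ := h p ⟨r, x, hx, y, hr, hyx⟩
    exact ⟨q, hq, y', hy', Part.mem_unique hx hx' ▸ hyx'⟩

theorem realizes_of_selection {s : Baire → Baire}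
    (hs : ∀ r, (ofProblem δX δY f r).Nonempty → s r ∈ ofProblem δX δY f r) :
    Realizes δX δY f fun r => Part.mk (ofProblem δX δY f r).Nonempty fun _ => s r :=
  realizes_iff.2 fun r hr => ⟨s r, mem_part_mk hr rfl, hs r hr⟩

theorem wRed_iff_reducesTo :
    WRed δX δY δZ δW f g ↔ (ofProblem δX δY f).ReducesTo (ofProblem δZ δW g) := by
  set P := ofProblem δZ δW g
  constructor
  · rintro ⟨H, K, hH, hK, h⟩
    refine ⟨K, H, hK, hH, fun p hp => ?_⟩
    have key : ∀ s : Baire → Baire, (∀ r, (P r).Nonempty → s r ∈ P r) →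
        ∃ r ∈ K p, (P r).Nonempty ∧ ∃ t ∈ H (pairB p (s r)), t ∈ ofProblem δX δY f p := by
      intro s hs
      obtain ⟨t, ht, htp⟩ := realizes_iff.1 (h _ (realizes_of_selection hs)) p hp
      obtain ⟨r, hr, ht⟩ := Part.mem_bind_iff.1 ht
      obtain ⟨_, ⟨hne, rfl⟩, ht⟩ := Part.mem_bind_iff.1 ht
      exact ⟨r, hr, hne, t, ht, htp⟩
    choose! s hs using fun r (hr : (P r).Nonempty) => hr
    obtain ⟨r, hr, hne, -⟩ := key s hs
    refine ⟨r, hr, hne, fun q hq => ?_⟩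
    have hsq : ∀ r', (P r').Nonempty → Function.update s r q r' ∈ P r' := by
      intro r' hr'
      rcases eq_or_ne r' r with rfl | hne
      · simpa using hq
      · simpa [hne] using hs r' hr'
    obtain ⟨r', hr', -, ht⟩ := key _ hsq
    simpa [Part.mem_unique hr' hr] using ht
  · rintro ⟨K, H, hK, hH, h⟩
    refine ⟨H, K, hH, hK, fun R hR => realizes_iff.2 fun p hp => ?_⟩
    obtain ⟨r, hr, hne, hsol⟩ := h p hp
    obtain ⟨q, hq, hqr⟩ := realizes_iff.1 hR r hne
    obtain ⟨t, ht, htp⟩ := hsol q hqr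
    exact ⟨t, Part.mem_bind_iff.2 ⟨r, hr, Part.mem_bind_iff.2 ⟨q, hq, ht⟩⟩, htp⟩

theorem ofProblem_repBaire (F : Baire → Set Baire) : ofProblem repBaire repBaire F = F := by
  ext p q
  simp [ofProblem, repBaire]

theorem ofProblem_prod :
    ofProblem (prodRep δX δZ) (prodRep δY δW) (prodProblem f g) =
      (ofProblem δX δY f).prod (ofProblem δZ δW g) := by
  ext p q
  simp only [ofProblem, prod, prodRep, prodProblem]
  aesop

theorem mk_mem_starRep_iff {p : Baire} {n : ℕ} {x : Fin n → X} :
    ⟨n, x⟩ ∈ (starRep δX).δ p ↔ p 0 = n ∧ ∀ i : Fin n, x i ∈ δX.δ (proj (tailB p) i) := by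
  constructor
  · rintro ⟨h, ⟨⟩⟩
    exact ⟨rfl, fun i => Classical.choose_spec (h i)⟩
  · rintro ⟨rfl, hx⟩
    exact mem_part_mk (fun i => ⟨x i, hx i⟩)
      (congrArg (Sigma.mk (p 0)) (funext fun i => Part.mem_unique (Classical.choose_spec _) (hx i)))

theorem ofProblem_star :
    ofProblem (starRep δX) (starRep δY) (starProblem f) = (ofProblem δX δY f).star := by
  ext p q
  constructor
  · rintro ⟨⟨n, x⟩, hx, ⟨m, y⟩, hy, hlen, hyx⟩
    obtain rfl : n = m := hlen
    rw [mk_mem_starRep_iff] at hx hy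
    refine ⟨hy.1.trans hx.1.symm, fun i hi => ?_⟩
    rw [hx.1] at hi
    exact ⟨x ⟨i, hi⟩, hx.2 ⟨i, hi⟩, y ⟨i, hi⟩, hy.2 ⟨i, hi⟩, hyx ⟨i, hi⟩⟩
  · rintro ⟨hlen, h⟩
    choose x hx y hy hyx using h
    exact ⟨⟨p 0, fun i => x i i.2⟩, mk_mem_starRep_iff.2 ⟨rfl, fun i => hx i i.2⟩,
      ⟨p 0, fun i => y i i.2⟩, mk_mem_starRep_iff.2 ⟨hlen, fun i => hy i i.2⟩, rfl,
      fun i => hyx i i.2⟩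

end Names

section Reductions

variable {F G L : NameProblem}

theorem ReducesTo.trans (hFG : F.ReducesTo G) (hGL : G.ReducesTo L) : F.ReducesTo L := by
  obtain ⟨K, H, hK, hH, h⟩ := hFG
  obtain ⟨K', H', hK', hH', h'⟩ := hGL
  have hback : BaireComputable fun s =>
      (K (evenPart s)).bind fun r => (H' (pairB r (oddPart s))).bind fun q =>
        H (pairB (evenPart s) q) :=
    (hK.comp_map ComputableMap.id.evenPart).bind <|
      (hH'.comp_map (ComputableMap.id.oddPart.pairB ComputableMap.id.evenPart.oddPart)).bind <|
        hH.comp_map (ComputableMap.id.evenPart.evenPart.evenPart.pairB ComputableMap.id.oddPart)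
  refine ⟨_, _, hK'.comp hK, hback, fun p hp => ?_⟩
  obtain ⟨r, hr, hne, hsol⟩ := h p hp
  obtain ⟨r', hr', hne', hsol'⟩ := h' r hne
  refine ⟨r', Part.mem_bind_iff.2 ⟨r, hr, hr'⟩, hne', fun q' hq' => ?_⟩
  obtain ⟨q, hq, hqr⟩ := hsol' q' hq'
  obtain ⟨t, ht, htp⟩ := hsol q hqr
  exact ⟨t, by simpa using ⟨r, hr, q, hq, ht⟩, htp⟩

theorem ReducesTo.of_computableMap {k h : Baire → Baire} (hk : ComputableMap k)
    (hh : ComputableMap h) (hdom : ∀ p, (F p).Nonempty → (G (k p)).Nonempty)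
    (hsol : ∀ p, ∀ q ∈ G (k p), h (pairB p q) ∈ F p) : F.ReducesTo G :=
  ⟨_, _, hk, hh, fun p hp => ⟨k p, Part.mem_some _, hdom p hp, fun q hq =>
    ⟨_, Part.mem_some _, hsol p q hq⟩⟩⟩

end Reductions

section Coproduct

/-- On a stack with top `p`, push the elements of `K p`. -/
def push (K : Baire →. Baire) : Baire →. Baire := fun s => (K (evenPart s)).map (pairB · s)

/-- On a state consisting of a solution `q` and a stack with topmost elements `r` and `p`, drop
`r` and replace `q` by the elements of `H ⟨p, q⟩`. -/
def pop (H : Baire →. Baire) : Baire →. Baire := fun s =>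
  (H (pairB (evenPart (oddPart (oddPart s))) (evenPart s))).map (pairB · (oddPart (oddPart s)))

variable {G : ℕ → NameProblem} {K H : Baire →. Baire}

theorem computable_push (hK : BaireComputable K) : BaireComputable (push K) :=
  (hK.comp_map ComputableMap.id.evenPart).map (ComputableMap.id.oddPart.pairB
    ComputableMap.id.evenPart)

theorem computable_pop (hH : BaireComputable H) : BaireComputable (pop H) :=
  (hH.comp_map (ComputableMap.id.oddPart.oddPart.evenPart.pairB ComputableMap.id.evenPart)).map
    (ComputableMap.id.oddPart.pairB ComputableMap.id.evenPart.oddPart.oddPart)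

theorem exists_mem_iterateB_push (h : ∀ n, (G (n + 1)).ReducesVia (G n) K H) (n : ℕ)
    {p : Baire} (hp : (G n p).Nonempty) (a : Baire) :
    ∃ s ∈ iterateB (push K) n (pairB p a), (G 0 (evenPart s)).Nonempty ∧
      ∀ q ∈ G 0 (evenPart s), ∃ t ∈ G n p,
        pairB t (pairB p a) ∈ iterateB (pop H) n (pairB q s) := by
  induction n generalizing p a with
  | zero =>
    exact ⟨_, Part.mem_some _, by simpa using hp, fun q hq =>
      ⟨q, by simpa using hq, Part.mem_some _⟩⟩
  | succ n ih =>
    obtain ⟨r, hr, hne, hsol⟩ := h n p hp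
    obtain ⟨s, hs, hne', hpop⟩ := ih hne (pairB p a)
    have hpush : pairB r (pairB p a) ∈ push K (pairB p a) := by
      simpa [push] using Part.mem_map (pairB · (pairB p a)) hr
    refine ⟨s, mem_iterateB_succ.2 ⟨_, hpush, hs⟩, hne', fun q hq => ?_⟩
    obtain ⟨t, ht, hmem⟩ := hpop q hq
    obtain ⟨t', ht', ht'p⟩ := hsol t ht
    refine ⟨t', ht'p, mem_iterateB_succ'.2 ⟨_, hmem, ?_⟩⟩
    simpa [pop] using Part.mem_map (pairB · (pairB p a)) ht'

theorem coprod_reducesTo_zero (hK : BaireComputable K) (hH : BaireComputable H)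
    (h : ∀ n, (G (n + 1)).ReducesVia (G n) K H) : (coprod G).ReducesTo (G 0) := by
  have hstack : BaireComputable fun p => iterateB (push K) (p 0) (pairB (tailB p) p) :=
    (computable_push hK).iterate.comp_map
      (ComputableMap.id.consB (ComputableMap.id.tailB.pairB ComputableMap.id))
  have hunstack : BaireComputable fun s =>
      (iterateB (pop H) (evenPart (evenPart s) 0) (pairB (oddPart (evenPart s)) (oddPart s))).map
        evenPart :=
    ((computable_pop hH).iterate.comp_map (ComputableMap.id.evenPart.evenPart.consB
      (ComputableMap.id.evenPart.oddPart.pairB ComputableMap.id.oddPart))).map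
        ComputableMap.id.oddPart.evenPart
  refine ⟨fun p => (iterateB (push K) (p 0) (pairB (tailB p) p)).map evenPart,
    fun s => (iterateB (push K) (evenPart s 0) (pairB (tailB (evenPart s)) (evenPart s))).bind
      fun r => (iterateB (pop H) (evenPart s 0) (pairB (oddPart s) r)).map evenPart,
    hstack.map ComputableMap.id.oddPart.evenPart,
    (hstack.comp_map ComputableMap.id.evenPart).bind hunstack, fun p hp => ?_⟩
  obtain ⟨s, hs, hne, hpop⟩ := exists_mem_iterateB_push h (p 0) hp p
  refine ⟨evenPart s, Part.mem_map _ hs, hne, fun q hq => ?_⟩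
  obtain ⟨t, ht, hmem⟩ := hpop q hq
  refine ⟨t, Part.mem_bind_iff.2 ⟨s, by simpa using hs, ?_⟩, ht⟩
  simpa using Part.mem_map evenPart hmem

end Coproduct

section Star

variable {F : NameProblem}

theorem mem_pow_zero (p q : Baire) : q ∈ pow 0 F p := fun _ h => absurd h (Nat.not_lt_zero _)

theorem mem_pow_succ {n : ℕ} {p q : Baire} :
    q ∈ pow (n + 1) F p ↔ proj q 0 ∈ F (proj p 0) ∧ tailCol q ∈ pow n F (tailCol p) := by
  simp only [pow, Set.mem_ofPred_eq, Nat.forall_lt_succ_left, proj_tailCol]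

theorem star_reducesTo_coprod (hid : ReducesTo idProblem F) :
    F.star.ReducesTo (coprod fun n => (pow n F).prod F) := by
  obtain ⟨K, _, hK, -, h⟩ := hid
  refine ⟨fun p => (K p).map fun c => consB (p 0) (pairB (tailB p) c),
    fun s => Part.some (consB (evenPart s 0) (evenPart (oddPart s))),
    hK.map (ComputableMap.id.evenPart.consB
      (ComputableMap.id.evenPart.tailB.pairB ComputableMap.id.oddPart)),
    ComputableMap.id.evenPart.consB ComputableMap.id.oddPart.evenPart, ?_⟩
  rintro p ⟨q, -, hq⟩
  obtain ⟨c, hc, ⟨d, hd⟩, -⟩ := h p ⟨p, rfl⟩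
  refine ⟨_, Part.mem_map _ hc, ⟨pairB (tailB q) d, ?_⟩, fun t ht => ⟨_, Part.mem_some _, ?_⟩⟩
  · simpa [coprod, prod] using ⟨hq, hd⟩
  · have ht' : evenPart t ∈ pow (p 0) F (tailB p) := by simpa [coprod] using ht.1
    simpa [star] using ht'

theorem exists_reducesVia_pow_prod (hF : (F.prod F).ReducesTo F) :
    ∃ K H, BaireComputable K ∧ BaireComputable H ∧
      ∀ n, ((pow (n + 1) F).prod F).ReducesVia ((pow n F).prod F) K H := by
  obtain ⟨K, H, hK, hH, h⟩ := hF
  have hfst : ComputableMap fun p => pairB (proj (evenPart p) 0) (oddPart p) :=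
    (ComputableMap.id.evenPart.proj 0).pairB ComputableMap.id.oddPart
  refine ⟨fun p => (K (pairB (proj (evenPart p) 0) (oddPart p))).map (pairB (tailCol (evenPart p))),
    fun s => (H (pairB (pairB (proj (evenPart (evenPart s)) 0) (oddPart (evenPart s)))
      (oddPart (oddPart s)))).map fun t =>
        pairB (consCol (evenPart t) (evenPart (oddPart s))) (oddPart t),
    (hK.comp_map hfst).map (ComputableMap.id.evenPart.evenPart.tailCol.pairB
      ComputableMap.id.oddPart),
    (hH.comp_map ((hfst.comp ComputableMap.id.evenPart).pairB
      ComputableMap.id.oddPart.oddPart)).map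
        ((ComputableMap.id.oddPart.evenPart.consCol
          ComputableMap.id.evenPart.oddPart.evenPart).pairB ComputableMap.id.oddPart.oddPart),
    fun n p => ?_⟩
  rintro ⟨q, hq, hq'⟩
  obtain ⟨hq₀, hqs⟩ := mem_pow_succ.1 hq
  have hne : (F.prod F (pairB (proj (evenPart p) 0) (oddPart p))).Nonempty :=
    ⟨pairB (proj (evenPart q) 0) (oddPart q), by simpa [prod] using ⟨hq₀, hq'⟩⟩
  obtain ⟨r, hr, ⟨d, hd⟩, hsol⟩ := h _ hne
  refine ⟨_, Part.mem_map _ hr, ⟨pairB (tailCol (evenPart q)) d, ?_⟩, fun s hs => ?_⟩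
  · simpa [prod] using ⟨hqs, hd⟩
  · obtain ⟨hss, hsr⟩ : evenPart s ∈ pow n F (tailCol (evenPart p)) ∧ oddPart s ∈ F r := by
      simpa [prod] using hs
    obtain ⟨t, ht, ht₀, ht'⟩ := hsol _ hsr
    refine ⟨_, Part.mem_map _ (by simpa using ht), ?_⟩
    simp only [evenPart_pairB, oddPart_pairB] at ht₀ ht'
    simpa [prod, mem_pow_succ] using ⟨⟨ht₀, hss⟩, ht'⟩

theorem pow_zero_prod_reducesTo : ((pow 0 F).prod F).ReducesTo F := by
  refine .of_computableMap (k := oddPart) (h := fun s => pairB (oddPart s) (oddPart s))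
    ComputableMap.id.oddPart (ComputableMap.id.oddPart.pairB ComputableMap.id.oddPart)
    (fun p ⟨q, hq⟩ => ⟨_, hq.2⟩) fun p q hq => ⟨mem_pow_zero _ _, ?_⟩
  simpa using hq

theorem star_reducesTo_self (hid : ReducesTo idProblem F) (hF : (F.prod F).ReducesTo F) :
    F.star.ReducesTo F := by
  obtain ⟨K, H, hK, hH, h⟩ := exists_reducesVia_pow_prod hF
  exact (star_reducesTo_coprod hid).trans
    ((coprod_reducesTo_zero hK hH h).trans pow_zero_prod_reducesTo)

theorem idProblem_reducesTo_star : ReducesTo idProblem F.star := by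
  refine .of_computableMap (k := fun _ _ => 0) (h := evenPart)
    (ComputableMap.const (Computable.const 0)) ComputableMap.id.evenPart
    (fun _ _ => ⟨fun _ => 0, rfl, mem_pow_zero _ _⟩) fun p q _ => ?_
  simp [idProblem]

theorem self_reducesTo_prod_self : F.ReducesTo (F.prod F) := by
  refine .of_computableMap (k := fun p => pairB p p) (h := fun s => evenPart (oddPart s))
    (ComputableMap.id.pairB ComputableMap.id) ComputableMap.id.oddPart.evenPart
    (fun p ⟨q, hq⟩ => ⟨pairB q q, ?_⟩) fun p q hq => ?_
  · simpa [prod] using hq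
  · simpa using hq.1

theorem self_reducesTo_star : F.ReducesTo F.star := by
  refine .of_computableMap (k := fun p => consB 1 (consCol p p))
    (h := fun s => proj (tailB (oddPart s)) 0)
    ((ComputableMap.const (Computable.const 1)).consB (ComputableMap.id.consCol ComputableMap.id))
    (ComputableMap.id.oddPart.tailB.proj 0)
    (fun p ⟨q, hq⟩ => ⟨consB 1 (consCol q q), ?_⟩) fun p q hq => ?_
  · simpa [star, mem_pow_succ, mem_pow_zero] using hq
  · simpa [mem_pow_succ, mem_pow_zero] using hq.2

theorem prod_self_reducesTo_star : (F.prod F).ReducesTo F.star := by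
  refine .of_computableMap
    (k := fun p => consB 2 (consCol (evenPart p) (consCol (oddPart p) p)))
    (h := fun s => pairB (proj (tailB (oddPart s)) 0) (proj (tailCol (tailB (oddPart s))) 0))
    ((ComputableMap.const (Computable.const 2)).consB (ComputableMap.id.evenPart.consCol
      (ComputableMap.id.oddPart.consCol ComputableMap.id)))
    ((ComputableMap.id.oddPart.tailB.proj 0).pairB (ComputableMap.id.oddPart.tailB.tailCol.proj 0))
    (fun p ⟨q, hq⟩ => ⟨consB 2 (consCol (evenPart q) (consCol (oddPart q) q)), ?_⟩)
    fun p q hq => ?_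
  · simpa [star, prod, mem_pow_succ, mem_pow_zero] using hq
  · simpa [prod, mem_pow_succ, mem_pow_zero] using hq.2

theorem star_reducesTo_self_iff :
    F.star.ReducesTo F ↔ ReducesTo idProblem F ∧ (F.prod F).ReducesTo F :=
  ⟨fun h => ⟨idProblem_reducesTo_star.trans h, prod_self_reducesTo_star.trans h⟩,
    fun h => star_reducesTo_self h.1 h.2⟩

end Star

end NameProblem

/-- `f` is pointed and idempotent iff `f* ≡_W f`. -/
theorem pointed_idempotent_iff_star (X Y : Type) (δX : RepSp X) (δY : RepSp Y)
    (f : X → Set Y) :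
    (WRed repBaire repBaire δX δY idProblem f ∧
      WEquiv (prodRep δX δX) (prodRep δY δY) δX δY (prodProblem f f) f) ↔
    WEquiv (starRep δX) (starRep δY) δX δY (starProblem f) f := by
  open NameProblem in
  simp only [WEquiv, wRed_iff_reducesTo, ofProblem_repBaire, ofProblem_prod, ofProblem_star,
    star_reducesTo_self_iff, self_reducesTo_prod_self, self_reducesTo_star, and_true]
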